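/- For every set C that is not Σ⁰₁, every computable instance T of the cross-constraint problem has a solution (X^i, Y^i)_{i<2} such that C is not Σ⁰₁ relative to (X⁰,Y⁰) ⊕ (X¹,Y¹). -/

import Mathlib

namespace Paper

/-- Codes for oracle Turing machines. -/
inductive OCode : Type
  | zero | succ | left | right | oracle
  | pair (a b : OCode) | comp (a b : OCode) | prec (a b : OCode) | rfind' (a : OCode)

/-- Evaluation of an oracle code with oracle `O`. -/
def oeval (O : ℕ → ℕ) : OCode → ℕ →. ℕ
  | .zero => pure 0
  | .succ => Nat.succ
  | .left => ↑fun n : ℕ => n.unpair.1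
  | .right => ↑fun n : ℕ => n.unpair.2
  | .oracle => ↑fun n : ℕ => O n
  | .pair cf cg => fun n => Nat.pair <$> oeval O cf n <*> oeval O cg n
  | .comp cf cg => fun n => oeval O cg n >>= oeval O cf
  | .prec cf cg =>
    Nat.unpaired fun a n =>
      n.rec (oeval O cf a) fun y IH => do
        let i ← IH
        oeval O cg (Nat.pair a (Nat.pair y i))
  | .rfind' cf =>
    Nat.unpaired fun a m =>
      (Nat.rfind fun n => (fun m => m = 0) <$> oeval O cf (Nat.pair a (n + m))).map (· + m)

/-- A numbering of oracle codes. -/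
def encodeOCode : OCode → ℕ
  | .zero => 0
  | .succ => 1
  | .left => 2
  | .right => 3
  | .oracle => 4
  | .pair a b => 4 * Nat.pair (encodeOCode a) (encodeOCode b) + 5
  | .comp a b => 4 * Nat.pair (encodeOCode a) (encodeOCode b) + 6
  | .prec a b => 4 * Nat.pair (encodeOCode a) (encodeOCode b) + 7
  | .rfind' a => 4 * encodeOCode a + 8

/-- The Turing jump of an oracle. -/
def jump (O : ℕ → ℕ) : Set ℕ :=
  { n | ∃ c : OCode, encodeOCode c = n.unpair.1 ∧ (oeval O c n.unpair.2).Dom }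

/-- `f` is (total) recursive in the oracle `O`. -/
def RecIn (O : ℕ → ℕ) (f : ℕ → ℕ) : Prop :=
  ∃ c : OCode, ∀ n, oeval O c n = Part.some (f n)

/-- The all-zero (trivial, computable) oracle. -/
def zeroO : ℕ → ℕ := fun _ => 0

/-- Characteristic function of a set of naturals. -/
noncomputable def chi (A : Set ℕ) : ℕ → ℕ := A.indicator fun _ => 1

/-- Turing join of two oracles. -/
def joinF (f g : ℕ → ℕ) : ℕ → ℕ := fun n => if n % 2 = 0 then f (n / 2) else g (n / 2)

/-- `A` is Σ⁰₁ relative to the oracle `O` (c.e. in `O`). -/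
def SigmaIn (O : ℕ → ℕ) (A : Set ℕ) : Prop :=
  ∃ c : OCode, ∀ n, n ∈ A ↔ (oeval O c n).Dom

/-- The halting problem `∅′`. -/
noncomputable def emptyJump : Set ℕ := jump zeroO

end Paper
namespace Paper

abbrev Str3 := List (Fin 3)
abbrev StrTup (r : ℕ) := Fin r → List (Fin 2)

/-- A cross-tree `T ⊆ 3^{<ℕ} × (2^{<ℕ})^r`. -/
structure CrossTree (r : ℕ) where
  mem : Set (Str3 × StrTup r)
  len_eq : ∀ p ∈ mem, ∀ i j : Fin r, (p.2 i).length = (p.2 j).length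
  len_le : ∀ p ∈ mem, ∀ i : Fin r, (p.2 i).length ≤ p.1.length
  closed : ∀ p ∈ mem, ∀ q : Str3 × StrTup r, q.1 <+: p.1 → (∀ i, q.2 i <+: p.2 i) →
    (∀ i j : Fin r, (q.2 i).length = (q.2 j).length) →
    (∀ i : Fin r, (q.2 i).length ≤ q.1.length) → q ∈ mem

/-- Length-`n` initial segment of an infinite sequence. -/
def seg {α : Type} (X : ℕ → α) (n : ℕ) : List α := List.ofFn fun i : Fin n => X i

/-- `(X, Y)` is an infinite path of the cross-tree `T`. -/
def IsPath {r : ℕ} (T : CrossTree r) (X : ℕ → Fin 3) (Y : Fin r → ℕ → Fin 2) : Prop :=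
  ∀ n, (seg X n, fun i => seg (Y i) n) ∈ T.mem

/-- The infinite sequence `X` extends the finite string `ρ`. -/
def ExtendsL {α : Type} (X : ℕ → α) (ρ : List α) : Prop :=
  ∀ i : Fin ρ.length, X i = ρ.get i

/-- `T` is left-full below `(ρ, σ)`. -/
def LeftFullBelow {r : ℕ} (T : CrossTree r) (ρ : Str3) (σ : StrTup r) : Prop :=
  ∀ X : ℕ → Fin 3, ExtendsL X ρ →
    ∃ Y : Fin r → ℕ → Fin 2, (∀ i, ExtendsL (Y i) (σ i)) ∧ IsPath T X Y

/-- `T` is left-full (below the pair of empty stems). -/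
def LeftFull {r : ℕ} (T : CrossTree r) : Prop := LeftFullBelow T [] fun _ => []

/-- Encoding of nodes of a cross-tree as natural numbers. -/
def encNode {r : ℕ} (p : Str3 × StrTup r) : ℕ :=
  Nat.pair (Encodable.encode p.1) (Encodable.encode (List.ofFn p.2))

/-- The cross-tree `T` is computable. -/
def TreeComputable {r : ℕ} (T : CrossTree r) : Prop :=
  RecIn zeroO (chi {n | ∃ p ∈ T.mem, encNode p = n})

/-- A solution to the cross-constraint problem on instance `T`: a pair of paths whose
first components are finitely compatible and whose second components are pairwise
infinitely compatible. -/
def CCSolution {r : ℕ} (T : CrossTree r) (X : Fin 2 → ℕ → Fin 3)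
    (Y : Fin 2 → Fin r → ℕ → Fin 2) : Prop :=
  (∀ i : Fin 2, IsPath T (X i) (Y i)) ∧
  (∀ j : Fin 3, {n | X 0 n = j ∧ X 1 n = j}.Finite) ∧
  (∀ s : Fin r, ∃ j : Fin 2, {n | Y 0 s n = j ∧ Y 1 s n = j}.Infinite)

/-- Oracle encoding a path `(X, Y)` of a cross-tree. -/
def solOracle {r : ℕ} (X : ℕ → Fin 3) (Y : Fin r → ℕ → Fin 2) : ℕ → ℕ := fun n =>
  if n.unpair.1 = 0 then (X n.unpair.2 : ℕ)
  else if h : n.unpair.1 - 1 < r then (Y ⟨n.unpair.1 - 1, h⟩ n.unpair.2 : ℕ) else 0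

end Paper

namespace Paper
open Encodable

section RE
variable {α β : Type} [Primcodable α] [Primcodable β]

theorem re_code {p : α → Prop} (hp : REPred p) :
    ∃ c : Nat.Partrec.Code, ∀ a, p a ↔ (c.eval (encode a)).Dom := by
  obtain ⟨c, hc⟩ := Nat.Partrec.Code.exists_code.1 hp
  refine ⟨c, fun a => ?_⟩
  rw [hc]
  simp [Part.assert]

theorem code_re (c : Nat.Partrec.Code) : REPred fun a : α => (c.eval (encode a)).Dom := by
  refine Partrec.dom_re (f := fun a : α => c.eval (encode a)) ?_
  exact Nat.Partrec.Code.eval_part.comp (Computable.const c) Computable.encode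

theorem re_of_comp {R : α × ℕ → Prop} (hR : ComputablePred R) : REPred fun a => ∃ k, R (a, k) := by
  obtain ⟨hd, hR⟩ := hR
  have h : Partrec fun a : α => Nat.rfind fun k => Part.some (decide (R (a, k))) :=
    Partrec.rfind (p := fun a k => Part.some (decide (R (a, k)))) hR.partrec.to₂
  refine (Partrec.dom_re h).of_eq fun a => ?_
  refine Nat.rfind_dom.trans ⟨?_, ?_⟩
  · rintro ⟨k, hk, -⟩
    exact ⟨k, by simpa using hk⟩
  · rintro ⟨k, hk⟩
    exact ⟨k, by simpa using hk, fun _ => trivial⟩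

theorem re_norm {p : α → Prop} (hp : REPred p) : ∃ R : α × ℕ → Prop, PrimrecPred R ∧
    (∀ a k l, k ≤ l → R (a, k) → R (a, l)) ∧ ∀ a, p a ↔ ∃ k, R (a, k) := by
  obtain ⟨c, hc⟩ := re_code hp
  refine ⟨fun q => (Nat.Partrec.Code.evaln q.2 c (encode q.1)).isSome = true, ?_, ?_, ?_⟩
  · have : Primrec fun q : α × ℕ => (Nat.Partrec.Code.evaln q.2 c (encode q.1)).isSome :=
      Primrec.option_isSome.comp (Nat.Partrec.Code.primrec_evaln.comp
        ((Primrec.snd.pair (Primrec.const c)).pair (Primrec.encode.comp Primrec.fst)))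
    exact ⟨inferInstance, by simpa using this⟩
  · intro a k l hkl h
    simp only [Option.isSome_iff_exists] at h ⊢
    obtain ⟨x, hx⟩ := h
    exact ⟨x, Nat.Partrec.Code.evaln_mono hkl hx⟩
  · intro a
    rw [hc, Part.dom_iff_mem]
    simp only [Option.isSome_iff_exists, Nat.Partrec.Code.evaln_complete]
    rw [exists_comm]
    rfl

theorem re_comp {p : β → Prop} (hp : REPred p) {f : α → β} (hf : Computable f) :
    REPred fun a => p (f a) := by
  exact Partrec.comp hp hf

theorem prim_comp {p : α → Prop} (hp : PrimrecPred p) : ComputablePred p := by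
  obtain ⟨h, hp⟩ := hp
  exact ⟨h, hp.to_comp⟩

theorem re_or {p q : α → Prop} (hp : REPred p) (hq : REPred q) : REPred fun a => p a ∨ q a := by
  obtain ⟨R, hR, -, h1⟩ := re_norm hp
  obtain ⟨S, hS, -, h2⟩ := re_norm hq
  refine (re_of_comp (prim_comp (hR.or hS))).of_eq fun a => ?_
  rw [h1, h2, exists_or]

theorem re_ex {p : α × β → Prop} (hp : REPred p) : REPred fun a => ∃ b, p (a, b) := by
  obtain ⟨R, ⟨hd, hR⟩, -, h1⟩ := re_norm hp
  have h : Primrec fun q : α × ℕ => ((decode (α := β) q.2.unpair.1).map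
      fun b => decide (R ((q.1, b), q.2.unpair.2))).getD false := by
    refine Primrec.option_getD.comp (Primrec.option_map
      (Primrec.decode.comp (Primrec.fst.comp (Primrec.unpair.comp Primrec.snd))) ?_) (Primrec.const false)
    exact hR.comp (((Primrec.fst.comp Primrec.fst).pair Primrec.snd).pair
      (Primrec.snd.comp (Primrec.unpair.comp (Primrec.snd.comp Primrec.fst))))
  have h' : ComputablePred fun q : α × ℕ => ((decode (α := β) q.2.unpair.1).map
      fun b => decide (R ((q.1, b), q.2.unpair.2))).getD false = true :=
    ⟨inferInstance, by simpa using h.to_comp⟩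
  refine (re_of_comp h').of_eq fun a => ?_
  constructor
  · rintro ⟨k, hk⟩
    cases hb : decode (α := β) k.unpair.1 with
    | none => simp [hb] at hk
    | some b => 
      simp [hb] at hk
      exact ⟨b, (h1 _).2 ⟨_, hk⟩⟩
  · rintro ⟨b, hb⟩
    obtain ⟨k, hk⟩ := (h1 _).1 hb
    exact ⟨Nat.pair (encode b) k, by simpa using hk⟩

theorem re_all {p : α × β → Prop} (hp : REPred p) {f : α → List β} (hf : Primrec f) :
    REPred fun a => ∀ b ∈ f a, p (a, b) := by
  obtain ⟨R, hR, hm, h1⟩ := re_norm hp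
  have h2 : PrimrecRel fun (b : β) (q : α × ℕ) => R ((q.1, b), q.2) :=
    hR.comp (((Primrec.fst.comp Primrec.snd).pair Primrec.fst).pair (Primrec.snd.comp Primrec.snd))
  have h3 := h2.forall_mem_list
  have h4 : PrimrecPred fun q : α × ℕ => ∀ b ∈ f q.1, R ((q.1, b), q.2) :=
    PrimrecPred.comp h3 (f := fun q : α × ℕ => (f q.1, q)) ((hf.comp Primrec.fst).pair Primrec.id)
  refine (re_of_comp (prim_comp h4)).of_eq fun a => ?_
  constructor
  · rintro ⟨k, hk⟩ b hb
    exact (h1 _).2 ⟨k, hk b hb⟩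
  · intro h
    have : ∀ l : List β, (∀ b ∈ l, p (a, b)) → ∃ k, ∀ b ∈ l, R ((a, b), k) := by
      intro l
      induction l with
      | nil => intro _; exact ⟨0, by simp⟩
      | cons x l ih =>
        intro hl
        obtain ⟨k, hk⟩ := ih fun b hb => hl b (List.mem_cons_of_mem _ hb)
        obtain ⟨k', hk'⟩ := (h1 _).1 (hl x List.mem_cons_self)
        refine ⟨max k k', fun b hb => ?_⟩
        rcases List.mem_cons.1 hb with rfl | hb
        · exact hm _ _ _ (le_max_right _ _) hk'
        · exact hm _ _ _ (le_max_left _ _) (hk b hb)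
    exact this _ h

end RE

/-- All lists of pairs whose first projection is the given list. -/
def lifts {ι β : Type} (bs : List β) : List ι → List (List (ι × β))
  | [] => [[]]
  | a :: u => bs.flatMap fun b => (lifts bs u).map fun l => (a, b) :: l

theorem mem_lifts {ι β : Type} (bs : List β) (hbs : ∀ b, b ∈ bs) (u : List ι) (l : List (ι × β)) :
    l ∈ lifts bs u ↔ l.map Prod.fst = u := by
  induction u generalizing l with
  | nil => simp [lifts]
  | cons a u ih =>
    simp only [lifts, List.mem_flatMap, List.mem_map, ih]
    constructor
    · rintro ⟨b, -, l, rfl, rfl⟩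
      simp
    · intro h
      cases l with
      | nil => simp at h
      | cons x l =>
        simp at h
        exact ⟨x.2, hbs _, l, h.2, by rw [← h.1]⟩

theorem lifts_prim {ι β : Type} [Primcodable ι] [Primcodable β] (bs : List β) :
    Primrec (lifts (ι := ι) bs) := by
  have h : Primrec fun u : List ι => u.foldr
      (fun a (r : List (List (ι × β))) => bs.flatMap fun b => r.map fun l => (a, b) :: l) [[]] := by
    refine Primrec.list_foldr (h := fun _ q => bs.flatMap fun b => q.2.map fun l => (q.1, b) :: l) 
      Primrec.id (Primrec.const _) ?_
    refine Primrec.list_flatMap (Primrec.const _) ?_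
    refine Primrec.list_map (Primrec.snd.comp (Primrec.snd.comp Primrec.fst)) ?_
    refine Primrec.list_cons.comp (Primrec.pair ?_ ?_) Primrec.snd
    · exact Primrec.fst.comp (Primrec.snd.comp (Primrec.fst.comp Primrec.fst))
    · exact Primrec.snd.comp Primrec.fst
  refine h.of_eq fun u => ?_
  induction u with
  | nil => rfl
  | cons a u ih => simp only [List.foldr_cons, ih, lifts]

end Paper

namespace Paper
open Encodable

/-- Evaluation of an oracle code with a partial oracle. -/
def oevalP (O : ℕ →. ℕ) : OCode → ℕ →. ℕ
  | .zero => pure 0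
  | .succ => Nat.succ
  | .left => ↑fun n : ℕ => n.unpair.1
  | .right => ↑fun n : ℕ => n.unpair.2
  | .oracle => O
  | .pair cf cg => fun n => Nat.pair <$> oevalP O cf n <*> oevalP O cg n
  | .comp cf cg => fun n => oevalP O cg n >>= oevalP O cf
  | .prec cf cg =>
    Nat.unpaired fun a n =>
      n.rec (oevalP O cf a) fun y IH => do
        let i ← IH
        oevalP O cg (Nat.pair a (Nat.pair y i))
  | .rfind' cf =>
    Nat.unpaired fun a m =>
      (Nat.rfind fun n => (fun m => m = 0) <$> oevalP O cf (Nat.pair a (n + m))).map (· + m)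

theorem oevalP_total (O : ℕ → ℕ) (c : OCode) : oevalP (fun n => Part.some (O n)) c = oeval O c := by
  induction c with
  | zero => rfl
  | succ => rfl
  | left => rfl
  | right => rfl
  | oracle => rfl
  | pair a b iha ihb => simp only [oevalP, oeval, iha, ihb]; rfl
  | comp a b iha ihb => simp only [oevalP, oeval, iha, ihb]; rfl
  | prec a b iha ihb => simp only [oevalP, oeval, iha, ihb]; rfl
  | rfind' a iha => simp only [oevalP, oeval, iha]; rfl

theorem partrec_sub {σ τ : Type} [Primcodable σ] [Primcodable τ] {F : σ → ℕ →. ℕ} (hF : Partrec₂ F)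
    {f : τ → σ} {g : τ → ℕ} (hf : Computable f) (hg : Computable g) :
    Partrec fun t => F (f t) (g t) := 
  Partrec.comp hF (hf.pair hg)

theorem oevalP_partrec {σ : Type} [Primcodable σ] (o : σ → ℕ →. ℕ) (ho : Partrec₂ o) (c : OCode) :
    Partrec₂ fun u n => oevalP (o u) c n := by
  induction c with
  | zero => exact (Computable.const 0).partrec
  | succ => exact (Computable.succ.comp Computable.snd).partrec
  | left => exact (Primrec.fst.comp (Primrec.unpair.comp Primrec.snd)).to_comp.partrec
  | right => exact (Primrec.snd.comp (Primrec.unpair.comp Primrec.snd)).to_comp.partrec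
  | oracle => exact ho
  | pair a b iha ihb =>
    have h : Partrec fun q : σ × ℕ => (oevalP (o q.1) a q.2).bind fun x =>
        (oevalP (o q.1) b q.2).map fun y => Nat.pair x y := by
      refine Partrec.bind iha ?_
      refine Partrec.map (Partrec.comp ihb Computable.fst) ?_
      exact (Primrec₂.natPair.comp (Primrec.snd.comp Primrec.fst) Primrec.snd).to_comp
    refine h.of_eq fun q => ?_
    simp [oevalP, Seq.seq, Part.bind_map]
  | comp a b iha ihb =>
    have h : Partrec fun q : σ × ℕ => (oevalP (o q.1) b q.2).bind fun x => oevalP (o q.1) a x := by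
      refine Partrec.bind (g := fun (q : σ × ℕ) x => oevalP (o q.1) a x) ihb ?_
      exact partrec_sub iha (Computable.fst.comp Computable.fst) Computable.snd
    exact h
  | prec a b iha ihb =>
    have hu : Primrec fun q : σ × ℕ => q.2.unpair := Primrec.unpair.comp Primrec.snd
    have h1 : Partrec fun q : σ × ℕ => oevalP (o q.1) a q.2.unpair.1 :=
      partrec_sub iha Computable.fst (Primrec.fst.comp hu).to_comp
    have h2 : Partrec fun w : (σ × ℕ) × (ℕ × ℕ) => 
        oevalP (o w.1.1) b (Nat.pair w.1.2.unpair.1 (Nat.pair w.2.1 w.2.2)) := by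
      refine partrec_sub ihb (Computable.fst.comp Computable.fst) ?_
      exact (Primrec₂.natPair.comp (Primrec.fst.comp (hu.comp Primrec.fst))
          (Primrec₂.natPair.comp (Primrec.fst.comp Primrec.snd)
            (Primrec.snd.comp Primrec.snd))).to_comp
    exact Partrec.nat_rec (h := fun (q : σ × ℕ) (z : ℕ × ℕ) =>
        oevalP (o q.1) b (Nat.pair q.2.unpair.1 (Nat.pair z.1 z.2))) 
        (Primrec.snd.comp hu).to_comp h1 h2
  | rfind' a iha =>
    have hu : Primrec fun q : σ × ℕ => q.2.unpair := Primrec.unpair.comp Primrec.snd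
    have h1 : Partrec fun w : (σ × ℕ) × ℕ => 
        oevalP (o w.1.1) a (Nat.pair w.1.2.unpair.1 (w.2 + w.1.2.unpair.2)) := by
      refine partrec_sub iha (Computable.fst.comp Computable.fst) ?_
      exact (Primrec₂.natPair.comp (Primrec.fst.comp (hu.comp Primrec.fst))
            (Primrec.nat_add.comp Primrec.snd (Primrec.snd.comp (hu.comp Primrec.fst)))).to_comp
    have h2 : Partrec₂ fun (q : σ × ℕ) (n : ℕ) => 
        (oevalP (o q.1) a (Nat.pair q.2.unpair.1 (n + q.2.unpair.2))).map
          (fun m => decide (m = 0)) := 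
      Partrec.map h1 (Primrec.eq.decide.comp Primrec.snd (Primrec.const 0)).to_comp
    exact Partrec.map (Partrec.rfind h2)
      (Primrec.nat_add.comp Primrec.snd (Primrec.snd.comp (hu.comp Primrec.fst))).to_comp

end Paper

namespace Paper
open Encodable

theorem mem_pair {A B : Part ℕ} {y : ℕ} :
    y ∈ (Nat.pair <$> A <*> B) ↔ ∃ a ∈ A, ∃ b ∈ B, Nat.pair a b = y := by
  simp [Seq.seq]

theorem mem_rf {F : ℕ →. ℕ} {m y : ℕ} :
    y ∈ (Nat.rfind fun n => (fun m => decide (m = 0)) <$> F n).map (· + m) ↔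
      ∃ n, 0 ∈ F n ∧ (∀ i < n, ∃ z ∈ F i, z ≠ 0) ∧ n + m = y := by
  simp only [Part.mem_map_iff]
  constructor
  · rintro ⟨n, hn, rfl⟩
    obtain ⟨h1, h2⟩ := Nat.mem_rfind.1 hn
    refine ⟨n, by simpa using h1, fun i hi => ?_, rfl⟩
    simpa using h2 hi
  · rintro ⟨n, h1, h2, rfl⟩
    refine ⟨n, Nat.mem_rfind.2 ⟨by simpa using h1, fun {i} hi => ?_⟩, rfl⟩
    simpa using h2 i hi

theorem oevalP_mono {O O' : ℕ →. ℕ} (h : ∀ n y, y ∈ O n → y ∈ O' n) (c : OCode) :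
    ∀ n y, y ∈ oevalP O c n → y ∈ oevalP O' c n := by
  induction c with
  | zero => exact fun n y h => h
  | succ => exact fun n y h => h
  | left => exact fun n y h => h
  | right => exact fun n y h => h
  | oracle => exact h
  | pair a b iha ihb =>
    intro n y hy
    obtain ⟨u, hu, v, hv, e⟩ := mem_pair.1 hy
    exact mem_pair.2 ⟨u, iha _ _ hu, v, ihb _ _ hv, e⟩
  | comp a b iha ihb =>
    intro n y hy
    obtain ⟨u, hu, hv⟩ := Part.mem_bind_iff.1 hy
    exact Part.mem_bind_iff.2 ⟨u, ihb _ _ hu, iha _ _ hv⟩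
  | prec a b iha ihb =>
    intro n y hy
    simp only [oevalP, Nat.unpaired] at hy ⊢
    generalize n.unpair.2 = m at hy ⊢
    induction m generalizing y with
    | zero => exact iha _ _ hy
    | succ m ih =>
      obtain ⟨u, hu, hv⟩ := Part.mem_bind_iff.1 hy
      exact Part.mem_bind_iff.2 ⟨u, ih _ hu, ihb _ _ hv⟩
  | rfind' a iha =>
    intro n y hy
    obtain ⟨k, h1, h2, e⟩ := mem_rf.1 hy
    refine mem_rf.2 ⟨k, iha _ _ h1, fun i hi => ?_, e⟩
    obtain ⟨z, hz, hz'⟩ := h2 i hi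
    exact ⟨z, iha _ _ hz, hz'⟩

theorem oevalP_cont {O : ℕ →. ℕ} (o : ℕ → ℕ →. ℕ)
    (hm : ∀ k l, k ≤ l → ∀ n y, y ∈ o k n → y ∈ o l n)
    (h : ∀ n y, y ∈ O n → ∃ k, y ∈ o k n) (c : OCode) :
    ∀ n y, y ∈ oevalP O c n → ∃ k, y ∈ oevalP (o k) c n := by
  have M : ∀ c n y k l, k ≤ l → y ∈ oevalP (o k) c n → y ∈ oevalP (o l) c n :=
    fun c n y k l hkl => oevalP_mono (hm k l hkl) c n y
  induction c with
  | zero => exact fun n y h => ⟨0, h⟩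
  | succ => exact fun n y h => ⟨0, h⟩
  | left => exact fun n y h => ⟨0, h⟩
  | right => exact fun n y h => ⟨0, h⟩
  | oracle => exact h
  | pair a b iha ihb =>
    intro n y hy
    obtain ⟨u, hu, v, hv, e⟩ := mem_pair.1 hy
    obtain ⟨k, hk⟩ := iha _ _ hu
    obtain ⟨l, hl⟩ := ihb _ _ hv
    exact ⟨max k l, mem_pair.2 ⟨u, M _ _ _ _ _ (le_max_left _ _) hk, v,
      M _ _ _ _ _ (le_max_right _ _) hl, e⟩⟩
  | comp a b iha ihb =>
    intro n y hy
    obtain ⟨u, hu, hv⟩ := Part.mem_bind_iff.1 hy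
    obtain ⟨k, hk⟩ := iha _ _ hv
    obtain ⟨l, hl⟩ := ihb _ _ hu
    exact ⟨max k l, Part.mem_bind_iff.2 ⟨u, M _ _ _ _ _ (le_max_right _ _) hl,
      M _ _ _ _ _ (le_max_left _ _) hk⟩⟩
  | prec a b iha ihb =>
    intro n y hy
    have M' : ∀ y k l, k ≤ l → y ∈ oevalP (o k) (.prec a b) n → y ∈ oevalP (o l) (.prec a b) n :=
      fun y k l => M _ _ _ _ _
    have Mm : ∀ m y k l, k ≤ l → y ∈ oevalP (o k) (.prec a b) (Nat.pair n.unpair.1 m) → 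
        y ∈ oevalP (o l) (.prec a b) (Nat.pair n.unpair.1 m) :=
      fun m y k l => M _ _ _ _ _
    simp only [oevalP, Nat.unpaired, Nat.unpair_pair] at hy Mm ⊢
    generalize n.unpair.2 = m at hy ⊢
    induction m generalizing y with
    | zero => exact iha _ _ hy
    | succ m ih =>
      obtain ⟨u, hu, hv⟩ := Part.mem_bind_iff.1 hy
      obtain ⟨k, hk⟩ := ih _ hu
      obtain ⟨l, hl⟩ := ihb _ _ hv
      exact ⟨max k l, Part.mem_bind_iff.2 ⟨u, Mm _ _ _ _ (le_max_left _ _) hk,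
        M _ _ _ _ _ (le_max_right _ _) hl⟩⟩
  | rfind' a iha =>
    intro n y hy
    obtain ⟨k, h1, h2, e⟩ := mem_rf.1 hy
    obtain ⟨l, hl⟩ := iha _ _ h1
    have : ∃ l', ∀ i < k, ∃ z ∈ oevalP (o l') a (Nat.pair n.unpair.1 (i + n.unpair.2)), z ≠ 0 := by
      clear h1 hl hy e
      induction k with
      | zero => exact ⟨0, by simp⟩
      | succ k ih =>
        obtain ⟨l1, hl1⟩ := ih fun i hi => h2 i (by omega)
        obtain ⟨z, hz, hz'⟩ := h2 k (by omega)
        obtain ⟨l2, hl2⟩ := iha _ _ hz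
        refine ⟨max l1 l2, fun i hi => ?_⟩
        rcases Nat.lt_succ_iff_lt_or_eq.1 hi with hi | rfl
        · obtain ⟨z, hz, hz'⟩ := hl1 i hi
          exact ⟨z, M _ _ _ _ _ (le_max_left _ _) hz, hz'⟩
        · exact ⟨z, M _ _ _ _ _ (le_max_right _ _) hl2, hz'⟩
    obtain ⟨l', hl'⟩ := this
    refine ⟨max l l', mem_rf.2 ⟨k, M _ _ _ _ _ (le_max_left _ _) hl, fun i hi => ?_, e⟩⟩
    obtain ⟨z, hz, hz'⟩ := hl' i hi
    exact ⟨z, M _ _ _ _ _ (le_max_right _ _) hz, hz'⟩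

/-- Translation of plain codes to oracle codes. -/
def toO : Nat.Partrec.Code → OCode
  | .zero => .zero
  | .succ => .succ
  | .left => .left
  | .right => .right
  | .pair a b => .pair (toO a) (toO b)
  | .comp a b => .comp (toO a) (toO b)
  | .prec a b => .prec (toO a) (toO b)
  | .rfind' a => .rfind' (toO a)

theorem toO_eval (O : ℕ → ℕ) (c : Nat.Partrec.Code) : oeval O (toO c) = c.eval := by
  induction c with
  | zero => rfl
  | succ => rfl
  | left => rfl
  | right => rfl
  | pair a b iha ihb => simp only [toO, oeval, Nat.Partrec.Code.eval, iha, ihb]; rfl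
  | comp a b iha ihb => simp only [toO, oeval, Nat.Partrec.Code.eval, iha, ihb]; rfl
  | prec a b iha ihb => simp only [toO, oeval, Nat.Partrec.Code.eval, iha, ihb]; rfl
  | rfind' a iha => simp only [toO, oeval, Nat.Partrec.Code.eval, iha]; rfl

theorem not_re_of {C : Set ℕ} (hC : ¬ SigmaIn zeroO C) : ¬ REPred fun n => n ∈ C := by
  intro h
  obtain ⟨c, hc⟩ := re_code h
  exact hC ⟨toO c, fun n => by rw [toO_eval]; exact hc n⟩

theorem recIn_computable {f : ℕ → ℕ} (h : RecIn zeroO f) : Computable f := by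
  obtain ⟨c, hc⟩ := h
  have := oevalP_partrec (σ := Unit) (fun _ n => Part.some (zeroO n))
    (Computable.const 0).partrec c
  have h2 : Partrec fun n : ℕ => oevalP (fun n => Part.some (zeroO n)) c n :=
    partrec_sub this (Computable.const ()) Computable.id
  refine h2.of_eq fun n => ?_
  rw [oevalP_total, hc]; rfl

/-- No r.e. relation on initial segments of `g` enumerates `C`. -/
def GoodSeq {γ : Type} [Primcodable γ] (C : Set ℕ) (g : ℕ → γ) : Prop :=
  ∀ W : ℕ × List γ → Prop, REPred W → {n | ∃ k, W (n, seg g k)} ≠ C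

theorem seg_getElem? {γ : Type} (g : ℕ → γ) (k i : ℕ) :
    (seg g k)[i]? = if i < k then some (g i) else none := by
  simp only [seg, List.getElem?_ofFn]
  split_ifs <;> rfl

theorem goodSeq_final {γ : Type} [Primcodable γ] {C : Set ℕ} {g : ℕ → γ} (hg : GoodSeq C g)
    (e : ℕ → γ → ℕ) (he : Primrec₂ e) (pos : ℕ → ℕ) (hpos : Primrec pos)
    (O : ℕ → ℕ) (hO : ∀ m, O m = e m (g (pos m))) : ¬ SigmaIn O C := by
  rintro ⟨c, hc⟩
  let o : List γ → ℕ →. ℕ := fun u m => (((u[pos m]?).map (e m) : Option ℕ) : Part ℕ)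
  have ho : Partrec₂ o := by
    have : Computable fun q : List γ × ℕ => (q.1[pos q.2]?).map (e q.2) := by
      refine (Primrec.option_map (Primrec.list_getElem?.comp Primrec.fst
        (hpos.comp Primrec.snd)) ?_).to_comp
      exact he.comp (Primrec.snd.comp Primrec.fst) Primrec.snd
    exact this.ofOption
  have hW : REPred fun q : ℕ × List γ => (oevalP (o q.2) c q.1).Dom :=
    Partrec.dom_re (f := fun q : ℕ × List γ => oevalP (o q.2) c q.1)
      (partrec_sub (oevalP_partrec o ho c) Computable.snd Computable.fst)
  have hoval : ∀ k n y, y ∈ o (seg g k) n ↔ pos n < k ∧ O n = y := by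
    intro k n y
    simp only [o, Part.mem_coe, seg_getElem?, hO]
    split_ifs with h <;> simp [h]
  refine hg _ hW (Set.ext fun n => ?_)
  rw [hc, Set.mem_ofPred_eq, ← oevalP_total]
  constructor
  · rintro ⟨k, hk⟩
    obtain ⟨y, hy⟩ := Part.dom_iff_mem.1 hk
    exact Part.dom_iff_mem.2 ⟨y, oevalP_mono (fun n y hy => by
      simpa using ((hoval k n y).1 hy).2.symm) c n y hy⟩
  · intro h
    obtain ⟨y, hy⟩ := Part.dom_iff_mem.1 h
    obtain ⟨k, hk⟩ := oevalP_cont (fun k => o (seg g k))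
      (fun k l hkl n y hy => (hoval l n y).2 ⟨by have := ((hoval k n y).1 hy).1; omega,
        ((hoval k n y).1 hy).2⟩)
      (fun n y hy => ⟨pos n + 1, (hoval _ n y).2 ⟨by omega, (Part.mem_some_iff.1 hy).symm⟩⟩) c n y hy
    exact ⟨k, Part.dom_iff_mem.2 ⟨y, hk⟩⟩

end Paper

namespace Paper
open Encodable

theorem seg_congr {γ : Type} {g h : ℕ → γ} {k : ℕ} (H : ∀ i < k, g i = h i) : seg g k = seg h k := by
  simp only [seg]
  congr 1
  funext i
  exact H i i.2

theorem seg_zero {γ : Type} (g : ℕ → γ) : seg g 0 = [] := by simp [seg]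

theorem seg_length {γ : Type} (g : ℕ → γ) (k : ℕ) : (seg g k).length = k := by simp [seg]

theorem seg_take {γ : Type} (g : ℕ → γ) (k j : ℕ) : (seg g k).take j = seg g (min j k) := by
  apply List.ext_getElem?
  intro i
  simp only [List.getElem?_take, seg_getElem?]
  split_ifs <;> first | rfl | omega

theorem seg_map {γ δ : Type} (f : γ → δ) (g : ℕ → γ) (k : ℕ) :
    (seg g k).map f = seg (fun i => f (g i)) k := by
  simp [seg, List.map_ofFn]; rfl

theorem compact_seq {β : Type} [Finite β] (Q : ℕ → (ℕ → β) → Prop)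
    (hloc : ∀ k g h, (∀ i < k, g i = h i) → Q k g → Q k h)
    (hne : ∀ n, ∃ h, ∀ k ≤ n, Q k h) : ∃ h, ∀ k, Q k h := by
  let : TopologicalSpace β := ⊥
  have : DiscreteTopology β := ⟨rfl⟩
  have hcl : ∀ k, IsClosed {h | Q k h} := by
    intro k
    rw [← isOpen_compl_iff, isOpen_iff_forall_mem_open]
    intro h hh
    refine ⟨⋂ i ∈ Finset.range k, {h' | h' i = h i}, ?_, ?_, by simp⟩
    · intro h' hh' hq
      simp only [Set.mem_iInter, Finset.mem_range] at hh'
      exact hh (hloc k h' h hh' hq)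
    · refine isOpen_biInter_finset fun i _ => ?_
      exact IsOpen.preimage (f := fun h' : ℕ → β => h' i) (continuous_apply i) (isOpen_discrete {h i})
  have := IsCompact.nonempty_iInter_of_sequence_nonempty_isCompact_isClosed
    (fun n => ⋂ k ∈ Finset.range (n + 1), {h : ℕ → β | Q k h}) ?_ ?_ ?_ ?_
  · obtain ⟨h, hh⟩ := this
    refine ⟨h, fun k => ?_⟩
    simp only [Set.mem_iInter, Finset.mem_range] at hh
    exact hh k k (by omega)
  · intro n h hh
    simp only [Set.mem_iInter, Finset.mem_range] at hh ⊢
    exact fun i hi => hh i (by omega)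
  · intro n
    obtain ⟨h, hh⟩ := hne n
    refine ⟨h, ?_⟩
    simp only [Set.mem_iInter, Finset.mem_range]
    exact fun i hi => hh i (by omega)
  · exact (isClosed_biInter fun i _ => hcl i).isCompact
  · exact fun n => isClosed_biInter fun i _ => hcl i

/-- The requirement `R` can be forced openly and densely. -/
def OpenDense {κ : Type} (R : (ℕ → κ) → Prop) : Prop :=
  ∀ (f : ℕ → κ) (n : ℕ), ∃ f' : ℕ → κ, (∀ i < n, f' i = f i) ∧
    ∃ k : ℕ, ∀ f'' : ℕ → κ, (∀ i < k, f'' i = f' i) → R f''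

theorem baire_seq {κ : Type} [Nonempty κ] (R : ℕ → (ℕ → κ) → Prop) (hR : ∀ m, OpenDense (R m)) :
    ∃ f, ∀ m, R m f := by
  have step : ∀ (m : ℕ) (p : (ℕ → κ) × ℕ), ∃ p' : (ℕ → κ) × ℕ, p.2 < p'.2 ∧
      (∀ i < p.2, p'.1 i = p.1 i) ∧ ∀ f'', (∀ i < p'.2, f'' i = p'.1 i) → R m f'' := by
    rintro m ⟨f, n⟩
    obtain ⟨f', h1, k, h2⟩ := hR m f n
    exact ⟨(f', max k (n + 1)), by simp, h1, fun f'' hf => h2 f'' fun i hi => hf i (by simp; omega)⟩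
  choose F hF1 hF2 hF3 using step
  let p : ℕ → (ℕ → κ) × ℕ := fun m => Nat.rec (fun _ => Classical.arbitrary κ, 0) (fun m q => F m q) m
  have hp : ∀ m, p (m + 1) = F m (p m) := fun m => rfl
  have hlen : ∀ m, m ≤ (p m).2 := by
    intro m
    induction m with
    | zero => simp
    | succ m ih => have := hF1 m (p m); rw [hp]; omega
  have hmono : ∀ m d, ∀ i < (p m).2, (p (m + d)).1 i = (p m).1 i ∧ (p m).2 ≤ (p (m + d)).2 := by
    intro m d i hi
    induction d with
    | zero => simp
    | succ d ih =>
      have h1 := hF2 (m + d) (p (m + d)) i (by omega)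
      have h2 := hF1 (m + d) (p (m + d))
      rw [← add_assoc, hp]
      exact ⟨h1.trans ih.1, by omega⟩
  refine ⟨fun i => (p (i + 1)).1 i, fun m => hF3 m (p m) _ fun i hi => ?_⟩
  rw [← hp] at hi ⊢
  rcases le_total m i with h | h
  · obtain ⟨d, hd⟩ := Nat.exists_eq_add_of_le (show m + 1 ≤ i + 1 by omega)
    show (p (i + 1)).1 i = _
    rw [hd]
    exact (hmono _ d i hi).1
  · obtain ⟨d, hd⟩ := Nat.exists_eq_add_of_le (show i + 1 ≤ m + 1 by omega)
    rw [hd]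
    exact (hmono (i + 1) d i (by have := hlen (i + 1); omega)).1.symm

/-- Concatenation of a finite and an infinite sequence. -/
def app {γ : Type} (l : List γ) (f : ℕ → γ) : ℕ → γ := fun k => (l[k]?).getD (f (k - l.length))

theorem app_lt {γ : Type} (l : List γ) (f : ℕ → γ) {k : ℕ} (h : k < l.length) : app l f k = l[k] := by
  simp [app, h]

theorem app_ge {γ : Type} (l : List γ) (f : ℕ → γ) {k : ℕ} (h : l.length ≤ k) :
    app l f k = f (k - l.length) := by
  simp [app, h]

theorem seg_app {γ : Type} (l : List γ) (f : ℕ → γ) (k : ℕ) :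
    seg (app l f) (l.length + k) = l ++ seg f k := by
  apply List.ext_getElem?
  intro i
  simp only [List.getElem?_append, seg_getElem?]
  by_cases h : i < l.length
  · rw [if_pos (by omega), if_pos h, app_lt _ _ h]; simp [h]
  · rw [if_neg h, app_ge _ _ (by omega)]
    split_ifs <;> first | rfl | omega

theorem exists_seg {γ : Type} (g : ℕ → γ) (k l : ℕ) (h : k ≤ l) :
    ∃ v, seg g l = seg g k ++ v := by
  refine ⟨(seg g l).drop k, ?_⟩
  conv_lhs => rw [← List.take_append_drop k (seg g l)]
  rw [seg_take, min_eq_left h]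

theorem goodSeq_iff_code {γ : Type} [Primcodable γ] (C : Set ℕ) (g : ℕ → γ) :
    GoodSeq C g ↔ ∀ c : Nat.Partrec.Code,
      {n | ∃ k, (c.eval (encode (n, seg g k))).Dom} ≠ C := by
  constructor
  · intro h c
    exact h (fun q => (c.eval (encode q)).Dom) (code_re c)
  · intro h W hW
    obtain ⟨c, hc⟩ := re_code hW
    simpa only [hc] using h c

theorem ne_set {A C : Set ℕ} (h : A ≠ C) : (∃ n, n ∈ A ∧ n ∉ C) ∨ ∃ n, n ∉ A ∧ n ∈ C := by
  by_contra hh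
  push Not at hh
  exact h (Set.ext fun n => ⟨hh.1 n, fun hn => by_contra fun h' => hh.2 n h' hn⟩)

theorem openDense_good {κ : Type} [Primcodable κ] [Nonempty κ] {C : Set ℕ}
    (hC : ¬ REPred fun n => n ∈ C) (W : ℕ × List κ → Prop) (hW : REPred W) :
    OpenDense fun g : ℕ → κ => {n | ∃ k, W (n, seg g k)} ≠ C := by
  intro f m
  have hre : REPred fun n : ℕ => ∃ q : List κ × ℕ, W (n, (seg f m ++ q.1).take q.2) := by
    refine re_ex (p := fun w : ℕ × (List κ × ℕ) => W (w.1, (seg f m ++ w.2.1).take w.2.2)) ?_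
    refine re_comp hW (Primrec.pair Primrec.fst ?_).to_comp
    exact Primrec.list_take.comp (Primrec.snd.comp Primrec.snd)
      (Primrec.list_append.comp (Primrec.const _) (Primrec.fst.comp Primrec.snd))
  have hne : {n : ℕ | ∃ q : List κ × ℕ, W (n, (seg f m ++ q.1).take q.2)} ≠ C := by
    rintro rfl
    exact hC hre
  rcases ne_set hne with ⟨n, ⟨⟨v, j⟩, hn⟩, hnC⟩ | ⟨n, hn, hnC⟩
  · let f' := app (seg f m ++ v) fun _ => Classical.arbitrary κ
    have hf' : seg f' (seg f m ++ v).length = seg f m ++ v := by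
      have := seg_app (seg f m ++ v) (fun _ => Classical.arbitrary κ) 0
      rwa [Nat.add_zero, seg_zero, List.append_nil] at this
    refine ⟨f', fun i hi => ?_, (seg f m ++ v).length, fun f'' hf'' => ?_⟩
    · have h1 : i < (seg f m ++ v).length := by simp [seg_length]; omega
      have h2 : (seg f m ++ v)[i]? = some (f i) := by
        rw [List.getElem?_append_left (by rw [seg_length]; exact hi), seg_getElem?, if_pos hi]
      simp [f', app, h2]
    · intro he
      refine hnC (he ▸ ⟨min j (seg f m ++ v).length, ?_⟩)
      rw [← seg_take, seg_congr hf'', hf']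
      exact hn
  · refine ⟨f, fun _ _ => rfl, m, fun f'' hf'' he => ?_⟩
    rw [← he] at hnC
    obtain ⟨k, hk⟩ := hnC
    obtain ⟨v, hv⟩ := exists_seg f'' m (max m k) (le_max_left _ _)
    refine hn ⟨(v, k), ?_⟩
    rw [← seg_congr hf'', ← hv, seg_take]
    simpa using hk

theorem cohen {κ : Type} [Primcodable κ] [Nonempty κ] {C : Set ℕ}
    (hC : ¬ REPred fun n => n ∈ C) {I : Type} [Countable I] (R : I → (ℕ → κ) → Prop)
    (hR : ∀ i, OpenDense (R i)) : ∃ g : ℕ → κ, GoodSeq C g ∧ ∀ i, R i g := by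
  let R' : I ⊕ Nat.Partrec.Code → (ℕ → κ) → Prop := fun x => match x with
    | .inl i => R i
    | .inr c => fun g => {n | ∃ k, (c.eval (encode (n, seg g k))).Dom} ≠ C
  have hR' : ∀ x, OpenDense (R' x) := by
    rintro (i | c)
    · exact hR i
    · exact openDense_good hC (fun q => (c.eval (encode q)).Dom) (code_re c)
  have : Nonempty (I ⊕ Nat.Partrec.Code) := ⟨.inr .zero⟩
  have : Countable Nat.Partrec.Code := Encodable.countable
  obtain ⟨e, he⟩ := exists_surjective_nat (I ⊕ Nat.Partrec.Code)
  obtain ⟨g, hg⟩ := baire_seq (fun m => R' (e m)) fun m => hR' _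
  have hg' : ∀ x, R' x g := fun x => by obtain ⟨m, rfl⟩ := he x; exact hg m
  exact ⟨g, (goodSeq_iff_code C g).2 fun c => hg' (.inr c), fun i => hg' (.inl i)⟩

end Paper

namespace Paper
open Encodable

/-- Pairing of two sequences. -/
def prs {ι β : Type} (g : ℕ → ι) (h : ℕ → β) : ℕ → ι × β := fun k => (g k, h k)

theorem basis_step {ι β : Type} [Primcodable ι] [Primcodable β] [Finite β] {C : Set ℕ}
    {g : ℕ → ι} (hg : GoodSeq C g) (B : List (ι × β) → Prop) (hB : REPred B)
    (h0 : ∃ h, ∀ k, ¬ B (seg (prs g h) k)) (W : ℕ × List (ι × β) → Prop) (hW : REPred W) :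
    ∃ B' : List (ι × β) → Prop, REPred B' ∧ (∃ h, ∀ k, ¬ B' (seg (prs g h) k)) ∧
      (∀ l, B l → B' l) ∧
      ∀ h, (∀ k, ¬ B' (seg (prs g h) k)) → {n | ∃ k, W (n, seg (prs g h) k)} ≠ C := by
  classical
  have : Fintype β := Fintype.ofFinite β
  have hbs : ∀ b : β, b ∈ (Finset.univ : Finset β).toList := by simp
  set bs := (Finset.univ : Finset β).toList with hbsdef
  have hV : REPred fun q : ℕ × List ι => ∀ l ∈ lifts bs q.2,
      ∃ j : ℕ, B (l.take j) ∨ W (q.1, l.take j) := by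
    refine re_all (p := fun w : (ℕ × List ι) × List (ι × β) =>
      ∃ j : ℕ, B (w.2.take j) ∨ W (w.1.1, w.2.take j)) ?_ ((lifts_prim bs).comp Primrec.snd)
    refine re_ex (p := fun z : ((ℕ × List ι) × List (ι × β)) × ℕ =>
      B (z.1.2.take z.2) ∨ W (z.1.1.1, z.1.2.take z.2)) ?_
    have ht : Primrec fun z : ((ℕ × List ι) × List (ι × β)) × ℕ => z.1.2.take z.2 :=
      Primrec.list_take.comp Primrec.snd (Primrec.snd.comp Primrec.fst)
    refine re_or (re_comp hB ht.to_comp) (re_comp hW (Primrec.pair ?_ ht).to_comp)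
    exact Primrec.fst.comp (Primrec.fst.comp Primrec.fst)
  have hmap : ∀ (h : ℕ → β) k, (seg (prs g h) k).map Prod.fst = seg g k := by
    intro h k
    rw [seg_map]; rfl
  rcases ne_set (hg _ hV) with ⟨n, ⟨k, hk⟩, hnC⟩ | ⟨n, hn, hnC⟩
  · refine ⟨B, hB, h0, fun _ h => h, fun h hh he => hnC ?_⟩
    obtain ⟨j, hj⟩ := hk (seg (prs g h) k) ((mem_lifts bs hbs _ _).2 (hmap h k))
    rw [seg_take] at hj
    rw [← he]
    exact ⟨_, hj.resolve_left (hh _)⟩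
  · refine ⟨fun l => B l ∨ W (n, l), ?_, ?_, fun _ h => Or.inl h, fun h hh he => ?_⟩
    · exact re_or hB (re_comp hW (Primrec.pair (Primrec.const n) Primrec.id).to_comp)
    · refine compact_seq (fun k h => ¬ (B (seg (prs g h) k) ∨ W (n, seg (prs g h) k))) ?_ ?_
      · intro k h h' hh hq
        rwa [← seg_congr (g := prs g h) (h := prs g h') fun i hi => by simp [prs, hh i hi]]
      · intro m
        have : ¬ ∀ l ∈ lifts bs (seg g m), ∃ j : ℕ, B (l.take j) ∨ W (n, l.take j) :=
          fun h => hn ⟨m, h⟩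
        push Not at this
        obtain ⟨l, hl, hl2⟩ := this
        rw [mem_lifts bs hbs] at hl
        obtain ⟨hd, -⟩ := h0
        refine ⟨fun i => ((l[i]?).map Prod.snd).getD (hd i), fun k hk => ?_⟩
        have : seg (prs g fun i => ((l[i]?).map Prod.snd).getD (hd i)) k = l.take k := by
          apply List.ext_getElem?
          intro i
          rw [seg_getElem?, List.getElem?_take]
          split_ifs with hi
          · have h1 : (l.map Prod.fst)[i]? = some (g i) := by
              rw [hl, seg_getElem?, if_pos (by omega)]
            rw [List.getElem?_map] at h1
            obtain ⟨a, ha, ha2⟩ := Option.map_eq_some_iff.1 h1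
            simp [prs, ha, ← ha2]
          · rfl
        rw [this]
        have := hl2 k
        tauto
    · rw [← he] at hnC
      obtain ⟨k, hk⟩ := hnC
      exact hh k (Or.inr hk)

theorem basis {ι β : Type} [Primcodable ι] [Primcodable β] [Finite β] {C : Set ℕ}
    {g : ℕ → ι} (hg : GoodSeq C g) (B : List (ι × β) → Prop) (hB : REPred B)
    (h0 : ∃ h, ∀ k, ¬ B (seg (prs g h) k)) :
    ∃ h, (∀ k, ¬ B (seg (prs g h) k)) ∧ GoodSeq C (prs g h) := by
  have : Countable Nat.Partrec.Code := Encodable.countable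
  have : Nonempty Nat.Partrec.Code := ⟨.zero⟩
  obtain ⟨e, he⟩ := exists_surjective_nat Nat.Partrec.Code
  let S := {B : List (ι × β) → Prop // REPred B ∧ ∃ h, ∀ k, ¬ B (seg (prs g h) k)}
  have step : ∀ (m : ℕ) (B : S), ∃ B' : S, (∀ l, B.1 l → B'.1 l) ∧
      ∀ h, (∀ k, ¬ B'.1 (seg (prs g h) k)) →
        {n | ∃ k, ((e m).eval (encode (n, seg (prs g h) k))).Dom} ≠ C := by
    rintro m ⟨B, hB, h0⟩
    obtain ⟨B', h1, h2, h3, h4⟩ := basis_step hg B hB h0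
      (fun q => ((e m).eval (encode q)).Dom) (code_re (e m))
    exact ⟨⟨B', h1, h2⟩, h3, h4⟩
  choose F hF1 hF2 using step
  let p : ℕ → S := fun m => Nat.rec ⟨B, hB, h0⟩ (fun m q => F m q) m
  have hp : ∀ m, p (m + 1) = F m (p m) := fun m => rfl
  have hmono : ∀ m d l, (p m).1 l → (p (m + d)).1 l := by
    intro m d l h
    induction d with
    | zero => exact h
    | succ d ih => rw [← add_assoc, hp]; exact hF1 _ _ _ ih
  have hall : ∃ h, ∀ k, ∀ i ≤ k, ∀ j ≤ k, ¬ (p i).1 (seg (prs g h) j) := by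
    refine compact_seq (fun k h => ∀ i ≤ k, ∀ j ≤ k, ¬ (p i).1 (seg (prs g h) j)) ?_ ?_
    · intro k h h' hh hq i hi j hj
      rw [← seg_congr (g := prs g h) (h := prs g h') fun i hi => by simp [prs, hh i (by omega)]]
      exact hq i hi j hj
    · intro m
      obtain ⟨h, hh⟩ := (p m).2.2
      refine ⟨h, fun k hk i hi j hj hB => hh j ?_⟩
      obtain ⟨d, rfl⟩ := Nat.exists_eq_add_of_le (hi.trans hk)
      exact hmono _ _ _ hB
  obtain ⟨h, hh⟩ := hall
  have hh' : ∀ i j, ¬ (p i).1 (seg (prs g h) j) := fun i j =>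
    hh (max i j) i (le_max_left _ _) j (le_max_right _ _)
  refine ⟨h, hh' 0, (goodSeq_iff_code _ _).2 fun c => ?_⟩
  obtain ⟨m, rfl⟩ := he c
  exact hF2 m (p m) h fun k => hh' (m + 1) k

end Paper

namespace Paper
open Encodable

abbrev Al (r : ℕ) := Fin r → Fin 2

/-- Membership of a node given by a string of tuples. -/
def Tm {r : ℕ} (T : CrossTree r) (q : List (Fin 3) × List (Al r)) : Prop :=
  (q.1, fun s => q.2.map fun a => a s) ∈ T.mem

theorem encNode_inj {r : ℕ} {p q : Str3 × StrTup r} (h : encNode p = encNode q) : p = q := by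
  unfold encNode at h
  rw [Nat.pair_eq_pair] at h
  obtain ⟨h1, h2⟩ := h
  exact Prod.ext (encode_injective h1) (List.ofFn_injective (encode_injective h2))

theorem Tm_computable {r : ℕ} {T : CrossTree r} (h : TreeComputable T) :
    ComputablePred (Tm T) := by
  have hf := recIn_computable h
  have he : Primrec fun q : List (Fin 3) × List (Al r) =>
      encNode ((q.1, fun s => q.2.map fun a => a s) : Str3 × StrTup r) := by
    refine Primrec₂.natPair.comp (Primrec.encode.comp Primrec.fst) (Primrec.encode.comp
      (Primrec.list_ofFn (f := fun s (q : List (Fin 3) × List (Al r)) => q.2.map fun a => a s)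
        fun s => Primrec.list_map Primrec.snd ?_))
    exact (Primrec.dom_finite fun a : Al r => a s).comp Primrec.snd
  classical
  have : ComputablePred fun q : List (Fin 3) × List (Al r) =>
      chi {n | ∃ p ∈ T.mem, encNode p = n} (encNode (q.1, fun s => q.2.map fun a => a s)) = 1 := by
    refine ⟨inferInstance, ?_⟩
    exact (Primrec.eq.decide.to_comp).comp (hf.comp he.to_comp) (Computable.const 1)
  refine this.of_eq fun q => ?_
  unfold chi Tm
  by_cases hq : (q.1, fun s => q.2.map fun a => a s) ∈ T.mem
  · simp only [hq, iff_true]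
    rw [Set.indicator_of_mem]
    exact ⟨_, hq, rfl⟩
  · simp only [hq, iff_false]
    rw [Set.indicator_of_notMem]
    · simp
    · rintro ⟨p, hp, e⟩
      rw [encNode_inj e] at hp
      exact hq hp

theorem isPath_iff {r : ℕ} (T : CrossTree r) (X : ℕ → Fin 3) (Y : ℕ → Al r) :
    IsPath T X (fun s k => Y k s) ↔ ∀ n, Tm T (seg X n, seg Y n) := by
  unfold IsPath Tm
  simp only [seg_map]

end Paper

namespace Paper
open Encodable

theorem re_exfin {α P : Type} [Primcodable α] [Finite P] (p : P → α → Prop)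
    (hp : ∀ x, REPred (p x)) : REPred fun a => ∃ x, p x a := by
  have : Fintype P := Fintype.ofFinite P
  have key : ∀ l : List P, REPred fun a => ∃ x ∈ l, p x a := by
    intro l
    induction l with
    | nil =>
      refine (prim_comp (PrimrecPred.not (p := fun _ : α => True)
        ⟨inferInstance, by simpa using Primrec.const true⟩)).to_re.of_eq fun a => by simp
    | cons x l ih =>
      exact (re_or (hp x) ih).of_eq fun a => by simp
  exact (key Finset.univ.toList).of_eq fun a => by simp

/-- Joint infinite paths over a family of left sides, with local constraints. -/
def Sat {r : ℕ} (T : CrossTree r) {κ : Type} (st : (κ → Fin 3) → List (Fin 3))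
    (E : ℕ → ((κ → Fin 3) → Al r) → Prop) (f : ℕ → κ) (h : ℕ → (κ → Fin 3) → Al r) : Prop :=
  (∀ x k, Tm T (seg (app (st x) fun i => x (f i)) k, seg (fun i => h i x) k)) ∧ ∀ i, E i (h i)

theorem Sat_closed {r : ℕ} (T : CrossTree r) {κ : Type} [Finite κ]
    (st : (κ → Fin 3) → List (Fin 3)) (E : ℕ → ((κ → Fin 3) → Al r) → Prop) (f : ℕ → κ)
    (H : ∀ k : ℕ, ∃ f' : ℕ → κ, (∀ i < k, f' i = f i) ∧ ∃ h, Sat T st E f' h) :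
    ∃ h, Sat T st E f h := by
  have := compact_seq (β := (κ → Fin 3) → Al r) (fun k h =>
    (∀ x, Tm T (seg (app (st x) fun i => x (f i)) k, seg (fun i => h i x) k)) ∧
      ∀ i < k, E i (h i)) ?_ ?_
  · obtain ⟨h, hh⟩ := this
    exact ⟨h, fun x k => (hh k).1 x, fun i => (hh (i + 1)).2 i (by omega)⟩
  · rintro k g h hgh ⟨h1, h2⟩
    refine ⟨fun x => ?_, fun i hi => ?_⟩
    · rw [← seg_congr (g := fun i => g i x) (h := fun i => h i x) fun i hi => by rw [hgh i hi]]
      exact h1 x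
    · rw [← hgh i hi]; exact h2 i hi
  · intro n
    obtain ⟨f', hf', h, h1, h2⟩ := H n
    refine ⟨h, fun k hk => ⟨fun x => ?_, fun i _ => h2 i⟩⟩
    rw [← seg_congr (g := app (st x) fun i => x (f' i)) (h := app (st x) fun i => x (f i))]
    · exact h1 x k
    · intro i hi
      simp only [app]
      rw [hf' _ (by omega)]

theorem generic_path {r : ℕ} {T : CrossTree r} (hT : TreeComputable T) {κ : Type} [Finite κ]
    [Primcodable κ] [Primcodable ((κ → Fin 3) → Fin 3 × Al r)]
    (st : (κ → Fin 3) → List (Fin 3)) (n : ℕ) (good : ((κ → Fin 3) → Al r) → Prop)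
    {C : Set ℕ} (f : ℕ → κ) (hf : GoodSeq C f)
    (hne : ∃ h, Sat T st (fun i b => n ≤ i → good b) f h) :
    ∃ h, Sat T st (fun i b => n ≤ i → good b) f h ∧
      GoodSeq C (prs f fun i (x : κ → Fin 3) => (app (st x) (fun i => x (f i)) i, h i x)) := by
  classical
  let B : List (κ × ((κ → Fin 3) → Fin 3 × Al r)) → Prop := fun l =>
    ((∃ x : κ → Fin 3, ¬ Tm T (l.map (fun a => (a.2 x).1), l.map (fun a => (a.2 x).2))) ∨
    (∃ x : κ → Fin 3, ¬ (l.map (fun a => (a.2 x).1) = (st x ++ l.map (fun a => x a.1)).take l.length))) ∨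
    ∃ a ∈ l.drop n, ¬ good fun x => (a.2 x).2
  have hmapp : ∀ {δ : Type} [Primcodable δ] (φ : κ × ((κ → Fin 3) → Fin 3 × Al r) → δ),
      Primrec fun l : List (κ × ((κ → Fin 3) → Fin 3 × Al r)) => l.map φ := fun φ =>
    Primrec.list_map Primrec.id ((Primrec.dom_finite φ).comp Primrec.snd)
  have hB : REPred B := by
    refine re_or (re_or (re_exfin _ fun x => ?_) (re_exfin _ fun x => ?_)) ?_
    · exact re_comp (Tm_computable hT).not.to_re ((hmapp _).pair (hmapp _)).to_comp
    · refine (prim_comp (PrimrecPred.not (Primrec.eq.comp (hmapp _) ?_))).to_re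
      exact Primrec.list_take.comp Primrec.list_length
        (Primrec.list_append.comp (Primrec.const _) (hmapp _))
    · have h1 : PrimrecPred fun a : κ × ((κ → Fin 3) → Fin 3 × Al r) => ¬ good fun x => (a.2 x).2 :=
        ⟨inferInstance, Primrec.dom_finite _⟩
      exact (prim_comp (PrimrecPred.comp (PrimrecPred.exists_mem_list h1)
        (Primrec.list_drop.comp (Primrec.const n) Primrec.id))).to_re
  have hiff : ∀ h : ℕ → (κ → Fin 3) → Fin 3 × Al r, (∀ k, ¬ B (seg (prs f h) k)) ↔
      (∀ x i, (h i x).1 = app (st x) (fun i => x (f i)) i) ∧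
      Sat T st (fun i b => n ≤ i → good b) f fun i x => (h i x).2 := by
    intro h
    have e1 : ∀ x k, (seg (prs f h) k).map (fun a => (a.2 x).1) = seg (fun i => (h i x).1) k :=
      fun x k => by rw [seg_map]; rfl
    have e2 : ∀ x k, (seg (prs f h) k).map (fun a => (a.2 x).2) = seg (fun i => (h i x).2) k :=
      fun x k => by rw [seg_map]; rfl
    have e3 : ∀ x k, (st x ++ (seg (prs f h) k).map (fun a => x a.1)).take (seg (prs f h) k).length =
        seg (app (st x) (fun i => x (f i))) k := by
      intro x k
      rw [seg_map, seg_length]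
      have := seg_app (st x) (fun i => x (f i)) k
      change (st x ++ seg (fun i => x (f i)) k).take k = _
      rw [← this, seg_take, min_eq_left (by omega)]
    have e4 : ∀ k, (∀ a ∈ (seg (prs f h) k).drop n, good fun x => (a.2 x).2) ↔
        ∀ i < k, n ≤ i → good fun x => (h i x).2 := by
      intro k
      simp only [List.mem_iff_getElem?, List.getElem?_drop, seg_getElem?]
      constructor
      · intro H i hi hn
        exact H (prs f h i) ⟨i - n, by rw [if_pos (by omega)]; congr; omega⟩
      · rintro H a ⟨i, hi⟩
        split_ifs at hi with h1
        obtain rfl := Option.some.inj hi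
        exact H _ h1 (by omega)
    have hB' : ∀ k, ¬ B (seg (prs f h) k) ↔
      ((∀ x, Tm T (seg (fun i => (h i x).1) k, seg (fun i => (h i x).2) k)) ∧
        (∀ x, seg (fun i => (h i x).1) k = seg (app (st x) (fun i => x (f i))) k)) ∧
        ∀ i < k, n ≤ i → good fun x => (h i x).2 := by
      intro k
      rw [← e4]
      simp only [B, e1, e2, e3, not_or, not_exists, not_not, not_and]
    simp only [hB']
    constructor
    · intro H
      have hX : ∀ x i, (h i x).1 = app (st x) (fun i => x (f i)) i := by
        intro x i
        have := congrArg (fun l => l[i]?) ((H (i + 1)).1.2 x)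
        simpa [seg_getElem?] using this
      refine ⟨hX, fun x k => ?_, fun i => (H (i + 1)).2 i (by omega)⟩
      rw [← (H k).1.2 x]
      exact (H k).1.1 x
    · rintro ⟨hX, h1, h2⟩ k
      have h3 : ∀ x, seg (fun i => (h i x).1) k = seg (app (st x) (fun i => x (f i))) k :=
        fun x => seg_congr fun i _ => hX x i
      exact ⟨⟨fun x => by rw [h3]; exact h1 x k, h3⟩, fun i _ => h2 i⟩
  obtain ⟨h, hh⟩ := hne
  obtain ⟨h', h1, h2⟩ := basis (β := (κ → Fin 3) → Fin 3 × Al r) hf B hB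
    ⟨fun i x => (app (st x) (fun i => x (f i)) i, h i x), (hiff _).2 ⟨fun _ _ => rfl, hh⟩⟩
  obtain ⟨h3, h4⟩ := (hiff _).1 h1
  refine ⟨_, h4, ?_⟩
  have e : (fun i (x : κ → Fin 3) => (app (st x) (fun i => x (f i)) i, (h' i x).2)) = h' :=
    funext fun i => funext fun x => Prod.ext (h3 x i).symm rfl
  rw [e]
  exact h2

theorem oracle_good {r : ℕ} {κ : Type} [Finite κ]
    [Primcodable κ] [Primcodable ((κ → Fin 3) → Fin 3 × Al r)]
    {C : Set ℕ} (f : ℕ → κ) (h : ℕ → (κ → Fin 3) → Fin 3 × Al r) (hg : GoodSeq C (prs f h))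
    (x y : κ → Fin 3) :
    ¬ SigmaIn (joinF (solOracle (fun k => (h k x).1) fun s k => (h k x).2 s)
      (solOracle (fun k => (h k y).1) fun s k => (h k y).2 s)) C := by
  let tab : (κ → Fin 3) → κ × ((κ → Fin 3) → Fin 3 × Al r) → List ℕ := fun x c =>
    ((c.2 x).1 : ℕ) :: List.ofFn fun s => ((c.2 x).2 s : ℕ)
  have htab : ∀ x i k, ((tab x (prs f h k))[i]?).getD 0 =
      solOracle (fun k => (h k x).1) (fun s k => (h k x).2 s) (Nat.pair i k) := by
    intro x i k
    simp only [solOracle, Nat.unpair_pair, tab, prs]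
    cases i with
    | zero => simp
    | succ i =>
      simp only [List.getElem?_cons_succ, List.getElem?_ofFn, Nat.succ_ne_zero, if_false,
        Nat.add_sub_cancel]
      split_ifs <;> rfl
  have hu : Primrec fun m : ℕ => (m / 2).unpair :=
    Primrec.unpair.comp (Primrec.nat_div.comp Primrec.id (Primrec.const 2))
  refine goodSeq_final hg (fun m c => ((if m % 2 = 0 then tab x c else tab y c)[(m / 2).unpair.1]?).getD 0)
    ?_ (fun m => (m / 2).unpair.2) (Primrec.snd.comp hu) _ ?_
  · refine Primrec.option_getD.comp (Primrec.list_getElem?.comp (Primrec.ite ?_ ?_ ?_) ?_)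
      (Primrec.const 0)
    · exact Primrec.eq.comp (Primrec.nat_mod.comp Primrec.fst (Primrec.const 2)) (Primrec.const 0)
    · exact (Primrec.dom_finite (tab x)).comp Primrec.snd
    · exact (Primrec.dom_finite (tab y)).comp Primrec.snd
    · exact Primrec.fst.comp (hu.comp Primrec.fst)
  · intro m
    have e : m / 2 = Nat.pair (m / 2).unpair.1 (m / 2).unpair.2 := (Nat.pair_unpair _).symm
    unfold joinF
    split_ifs with hm
    · rw [htab, ← e]
    · rw [htab, ← e]

end Paper

namespace Paper
open Encodable

/-- Pairs of distinct colours. -/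
abbrev K6 := {p : Fin 3 × Fin 3 // p.1 ≠ p.2}

/-- Agreement of all the tuples on the coordinates in `S`. -/
def EqS {r : ℕ} {P : Type} (S : Finset (Fin r)) (b : P → Al r) : Prop :=
  ∀ x x', ∀ s ∈ S, b x s = b x' s

/-- Disagreement along the edges, on the coordinate chosen by `π`. -/
def NeqS {r : ℕ} {κ : Type} (π : (κ → K6) → Fin r) (b : (κ → Fin 3) → Al r) : Prop :=
  ∀ ε : κ → K6, b (fun j => (ε j).1.1) (π ε) ≠ b (fun j => (ε j).1.2) (π ε)

/-- The conclusion of the main theorem. -/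
def HasSol {r : ℕ} (T : CrossTree r) (C : Set ℕ) : Prop :=
  ∃ (X : Fin 2 → ℕ → Fin 3) (Y : Fin 2 → Fin r → ℕ → Fin 2),
      CCSolution T X Y ∧
      ¬ SigmaIn (joinF (solOracle (X 0) (Y 0)) (solOracle (X 1) (Y 1))) C

theorem openDense_D {r : ℕ} (T : CrossTree r) {κ : Type} [Finite κ]
    (st : (κ → Fin 3) → List (Fin 3)) (E : ℕ → ((κ → Fin 3) → Al r) → Prop)
    (H : ∀ v : List κ, ∃ f : ℕ → κ, ¬ ∃ h, Sat T st E (app v f) h) :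
    OpenDense fun f : ℕ → κ => ¬ ∃ h, Sat T st E f h := by
  intro f n
  obtain ⟨f', hf'⟩ := H (seg f n)
  refine ⟨app (seg f n) f', fun i hi => ?_, ?_⟩
  · simp [app, seg_getElem?, hi]
  · by_contra hc
    push Not at hc
    refine hf' (Sat_closed T st E _ fun k => ?_)
    exact hc k

theorem step_A {r : ℕ} {T : CrossTree r} (hT : TreeComputable T) {C : Set ℕ}
    (hC : ¬ REPred fun n => n ∈ C) (hno : ¬ HasSol T C) {κ : Type} [Finite κ] [Nonempty κ]
    (S : Finset (Fin r)) (st : (κ → Fin 3) → List (Fin 3)) (L : ℕ) (hL : ∀ x, (st x).length = L)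
    (n : ℕ) (hbase : ∀ f : ℕ → κ, ∃ h, Sat T st (fun i b => n ≤ i → EqS S b) f h) :
    ∃ (v : List κ) (π : (κ → K6) → Fin r) (n' : ℕ), ∀ f : ℕ → κ, ∃ h,
      Sat T st (fun i b => (n ≤ i → EqS S b) ∧ (n' ≤ i → NeqS π b)) (app v f) h := by
  classical
  by_contra hcon
  push Not at hcon
  have := Fintype.ofFinite κ
  let i1 : Primcodable κ := Primcodable.ofEquiv _ (Fintype.equivFin κ)
  let i2 : Primcodable ((κ → Fin 3) → Fin 3 × Al r) := Primcodable.ofEquiv _ (Fintype.equivFin _)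
  obtain ⟨f, hf, hD⟩ := cohen hC (I := ((κ → K6) → Fin r) × ℕ)
    (fun q (f : ℕ → κ) => ¬ ∃ h, Sat T st (fun i b => (n ≤ i → EqS S b) ∧ (q.2 ≤ i → NeqS q.1 b)) f h)
    (fun q => openDense_D T st _ fun v => by
      obtain ⟨f, hf⟩ := hcon v q.1 q.2
      exact ⟨f, fun ⟨h, hh⟩ => hf h hh⟩)
  obtain ⟨h, ⟨h1, h2⟩, h3⟩ := generic_path hT st n (EqS S) f hf (hbase f)
  have hedge : ∃ ε : κ → K6, ∀ s : Fin r, ∀ m : ℕ, ∃ i ≥ m,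
      h i (fun j => (ε j).1.1) s = h i (fun j => (ε j).1.2) s := by
    by_contra hc
    push Not at hc
    choose π m hm using hc
    refine hD (π, Finset.univ.sup m) ⟨h, h1, fun i => ⟨h2 i, fun hi ε => ?_⟩⟩
    exact hm ε i ((Finset.le_sup (Finset.mem_univ ε)).trans hi)
  obtain ⟨ε, hε⟩ := hedge
  set x : κ → Fin 3 := fun j => (ε j).1.1 with hx
  set y : κ → Fin 3 := fun j => (ε j).1.2 with hy
  have hor := oracle_good f _ h3 x y
  refine hno ⟨![app (st x) (fun i => x (f i)), app (st y) (fun i => y (f i))],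
    ![fun s k => h k x s, fun s k => h k y s], ⟨?_, ?_, ?_⟩, hor⟩
  · intro i
    fin_cases i
    · exact (isPath_iff T _ fun k => h k x).2 (h1 x)
    · exact (isPath_iff T _ fun k => h k y).2 (h1 y)
  · intro j
    refine (Set.finite_lt_nat L).subset ?_
    rintro k ⟨hk1, hk2⟩
    by_contra hk
    have hk' : L ≤ k := not_lt.1 hk
    have hk1' : app (st x) (fun i => x (f i)) k = j := hk1
    have hk2' : app (st y) (fun i => y (f i)) k = j := hk2
    rw [app_ge _ _ (by rw [hL]; exact hk'), hL] at hk1' hk2'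
    exact (ε (f (k - L))).2 (hk1'.trans hk2'.symm)
  · intro s
    by_contra hc
    push Not at hc
    have hfin : (⋃ j : Fin 2, {k | h k x s = j ∧ h k y s = j}).Finite :=
      Set.finite_iUnion fun j => hc j
    obtain ⟨b, hb⟩ := hfin.bddAbove
    obtain ⟨i, hi, hi2⟩ := hε s (b + 1)
    have := hb (Set.mem_iUnion.2 ⟨h i y s, hi2, rfl⟩)
    omega

/-- The inductive statement: joint paths agreeing on the coordinates in `S`. -/
def Base {r : ℕ} (T : CrossTree r) (κ : Type) (S : Finset (Fin r)) : Prop :=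
  ∃ (st : (κ → Fin 3) → List (Fin 3)) (L n : ℕ), (∀ x, (st x).length = L) ∧
    ∀ f : ℕ → κ, ∃ h, Sat T st (fun i b => n ≤ i → EqS S b) f h

theorem app_app {κ : Type} (l : List (Fin 3)) (v : List κ) (x : κ → Fin 3) (f : ℕ → κ) :
    app l (fun i => x (app v f i)) = app (l ++ v.map x) fun i => x (f i) := by
  funext k
  by_cases h : k < l.length
  · rw [app_lt _ _ h, app_lt _ _ (by simp; omega), List.getElem_append_left h]
  · rw [app_ge _ _ (by omega)]
    by_cases h2 : k - l.length < v.length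
    · rw [app_lt _ _ h2, app_lt _ _ (by simp; omega), List.getElem_append_right (by omega)]
      simp
    · rw [app_ge _ _ (by omega), app_ge _ _ (by simp; omega)]
      congr 2
      simp; omega

theorem exists_third (a b : Fin 3) : ∃ c : Fin 3, a ≠ c ∧ b ≠ c := by
  revert a b; decide

theorem fin2_eq (a b c : Fin 2) (h : a ≠ c) (h' : b ≠ c) : a = b := by
  revert a b c; decide

theorem step_B {r : ℕ} {T : CrossTree r} (hT : TreeComputable T) {C : Set ℕ}
    (hC : ¬ REPred fun n => n ∈ C) (hno : ¬ HasSol T C) (η : Type) [Finite η] [Nonempty η] (m : ℕ)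
    (IH : ∀ (κ : Type) [Finite κ] [Nonempty κ], ∃ S : Finset (Fin r), S.card = m ∧ Base T κ S) :
    ∃ S : Finset (Fin r), S.card = m + 1 ∧ Base T η S := by
  classical
  obtain ⟨κ, hκ, hJ⟩ := Combinatorics.Subspace.exists_mono_in_high_dimension K6 (Option (Fin r)) η
  have hne : Nonempty κ := by
    obtain ⟨l, -⟩ := hJ fun _ => none
    obtain ⟨e⟩ := ‹Nonempty η›
    exact ⟨(l.proper e).choose⟩
  obtain ⟨S, hS, st, L, n, hL, hbase⟩ := IH κ
  obtain ⟨v, π, n', hfull⟩ := step_A hT hC hno S st L hL n hbase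
  obtain ⟨l, c, hc⟩ := hJ fun ε => some (π ε)
  let ε0 : η → K6 := fun _ => ⟨(0, 1), by decide⟩
  have hcs : c = some (π (l ε0)) := (hc ε0).symm
  obtain ⟨s, hs⟩ : ∃ s, ∀ ε : η → K6, π (l ε) = s :=
    ⟨π (l ε0), fun ε => Option.some.inj ((hc ε).trans hcs)⟩
  choose rep hrep using l.proper
  let X1 : (η → Fin 3) → κ → Fin 3 := fun y j => match l.idxFun j with
    | .inl c => c.1.1
    | .inr e => y e
  let X2 : (η → Fin 3) → κ → Fin 3 := fun y j => match l.idxFun j with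
    | .inl c => c.1.2
    | .inr e => y e
  have hX1rep : ∀ y e, X1 y (rep e) = y e := by
    intro y e; simp only [X1, hrep]
  have hedge : ∀ (y z : η → Fin 3) (hyz : ∀ e, y e ≠ z e),
      ∃ ε : κ → K6, π ε = s ∧ (fun j => (ε j).1.1) = X1 y ∧ (fun j => (ε j).1.2) = X2 z := by
    intro y z hyz
    refine ⟨l fun e => ⟨(y e, z e), hyz e⟩, hs _, ?_, ?_⟩
    · funext j
      simp only [X1]
      cases hj : l.idxFun j with
      | inl c => simp [Combinatorics.Subspace.apply_inl hj]
      | inr e => simp [Combinatorics.Subspace.apply_inr hj]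
    · funext j
      simp only [X2]
      cases hj : l.idxFun j with
      | inl c => simp [Combinatorics.Subspace.apply_inl hj]
      | inr e => simp [Combinatorics.Subspace.apply_inr hj]
  have hsS : s ∉ S := by
    intro hsS
    obtain ⟨h, -, h2⟩ := hfull fun _ => Classical.arbitrary κ
    obtain ⟨h3, h4⟩ := h2 (max n n')
    exact h4 (le_max_right _ _) (l ε0) (h3 (le_max_left _ _) _ _ _ (by rw [hs]; exact hsS))
  refine ⟨insert s S, by rw [Finset.card_insert_of_notMem hsS, hS],
    fun y => st (X1 y) ++ v.map (X1 y), L + v.length, max n n', fun y => by simp [hL], fun f => ?_⟩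
  obtain ⟨h, h1, h2⟩ := hfull fun i => rep (f i)
  refine ⟨fun i y => h i (X1 y), fun y k => ?_, fun i hi y y' t ht => ?_⟩
  · have := h1 (X1 y) k
    rw [app_app] at this
    simpa only [hX1rep] using this
  · obtain ⟨h3, h4⟩ := h2 i
    rcases Finset.mem_insert.1 ht with rfl | ht
    · choose z hz1 hz2 using fun e => exists_third (y e) (y' e)
      obtain ⟨ε, e1, e2, e3⟩ := hedge y z hz1
      obtain ⟨ε', e1', e2', e3'⟩ := hedge y' z hz2
      have a1 := h4 ((le_max_right _ _).trans hi) ε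
      have a2 := h4 ((le_max_right _ _).trans hi) ε'
      rw [e1, e2, e3] at a1
      rw [e1', e2', e3'] at a2
      exact fin2_eq _ _ _ a1 a2
    · exact h3 ((le_max_left _ _).trans hi) _ _ t ht

theorem base_zero {r : ℕ} {T : CrossTree r} (hfull : LeftFull T) (κ : Type) : Base T κ ∅ := by
  refine ⟨fun _ => [], 0, 0, fun _ => rfl, fun f => ?_⟩
  have := fun x : κ → Fin 3 => hfull (fun i => x (f i)) fun i => i.elim0
  choose Y hY1 hY2 using this
  refine ⟨fun i x s => Y x s i, fun x k => ?_, fun i _ x x' s hs => by simp at hs⟩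
  have h := (isPath_iff T (fun i => x (f i)) (fun i s => Y x s i)).1 (hY2 x) k
  have e : app [] (fun i => x (f i)) = fun i => x (f i) := by
    funext i; simp [app]
  rw [e]
  exact h

end Paper

namespace Paper

/-- Cross-constraint preservation of non-Σ⁰₁ definitions: for every non-Σ⁰₁ set `C`,
every left-full computable instance of the cross-constraint problem has a solution
relative to whose join `C` is still not Σ⁰₁. -/
theorem cc_preserves_nonSigma01 (C : Set ℕ) (hC : ¬ SigmaIn zeroO C)
    (r : ℕ) (T : CrossTree r) (hcomp : TreeComputable T) (hfull : LeftFull T) :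
    ∃ (X : Fin 2 → ℕ → Fin 3) (Y : Fin 2 → Fin r → ℕ → Fin 2),
      CCSolution T X Y ∧
      ¬ SigmaIn (joinF (solOracle (X 0) (Y 0)) (solOracle (X 1) (Y 1))) C := by
  by_contra hno
  have key : ∀ (m : ℕ) (κ : Type) [Finite κ] [Nonempty κ],
      ∃ S : Finset (Fin r), S.card = m ∧ Base T κ S := by
    intro m
    induction m with
    | zero => exact fun κ _ _ => ⟨∅, rfl, base_zero hfull κ⟩
    | succ m ih =>
      intro κ _ _
      exact step_B hcomp (not_re_of hC) hno κ m ih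
  obtain ⟨S, hS, -⟩ := key (r + 1) Unit
  have := S.card_le_univ
  rw [hS, Fintype.card_fin] at this
  omega

end Paper
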